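/- arXiv:1401.3384 — 6 statements merged into one kernel-verified Lean document; each statement's English description precedes it below -/
import Mathlib

section
/- Let ḡ be an invertible symmetric n×n real matrix, let f, Y ∈ ℝⁿ satisfy fᵀ ḡ⁻¹ Y = 0, let φ ∈ ℝ and u > 0 satisfy u² = φ + Yᵀ ḡ⁻¹ Y, and assume 1 − u² fᵀ ḡ⁻¹ f > 0. Set g := ḡ − fYᵀ − Yfᵀ − φ f fᵀ and w := (u ḡ⁻¹ f + u⁻¹ ḡ⁻¹ Y)/√(1 − u² fᵀ ḡ⁻¹ f). Then g is invertible and g⁻¹ = ḡ⁻¹ − u⁻²(ḡ⁻¹Y)(ḡ⁻¹Y)ᵀ + w wᵀ. -/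
/-!
Write `p = ḡ⁻¹ f`, `q = ḡ⁻¹ Y`, `s = 1 - u² (f ⬝ p)`, `b = Y ⬝ q`. Since `f ⬝ q = 0` and, by symmetry,
`Y ⬝ p = 0`, the rank-one updates act simply: `g q = Y - b f`, and substituting `φ = u² - b`,
`g (u p + u⁻¹ q) = s ((u - b / u) f + u⁻¹ Y)`. The factor `s` cancels the normalisation of `w wᵀ`,
and the rank-one terms in `f qᵀ`, `Y pᵀ`, `f pᵀ`, `Y qᵀ` in the product of `g` with the claimed
inverse all vanish. A right inverse of a square matrix is its inverse.
-/

open Matrix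

theorem inverse_of_graph_deformed_metric (n : ℕ)
    (gbar : Matrix (Fin n) (Fin n) ℝ) (hsymm : gbar.IsSymm) (hinv : IsUnit gbar.det)
    (f Y : Fin n → ℝ) (horth : f ⬝ᵥ gbar⁻¹.mulVec Y = 0)
    (φ u : ℝ) (hu : 0 < u) (huu : u ^ 2 = φ + Y ⬝ᵥ gbar⁻¹.mulVec Y)
    (hpos : 0 < 1 - u ^ 2 * (f ⬝ᵥ gbar⁻¹.mulVec f)) :
    let g : Matrix (Fin n) (Fin n) ℝ :=
      gbar - vecMulVec f Y - vecMulVec Y f - φ • vecMulVec f f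
    let w : Fin n → ℝ :=
      (Real.sqrt (1 - u ^ 2 * (f ⬝ᵥ gbar⁻¹.mulVec f)))⁻¹ •
        (u • gbar⁻¹.mulVec f + u⁻¹ • gbar⁻¹.mulVec Y)
    IsUnit g.det ∧
      g⁻¹ = gbar⁻¹ - (u ^ 2)⁻¹ • vecMulVec (gbar⁻¹.mulVec Y) (gbar⁻¹.mulVec Y)
              + vecMulVec w w := by
  intro g w
  have hgG : gbar * gbar⁻¹ = 1 := mul_nonsing_inv gbar hinv
  have hsymm' : (gbar⁻¹)ᵀ = gbar⁻¹ := by rw [transpose_nonsing_inv, hsymm.eq]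
  have hvec : ∀ v : Fin n → ℝ, v ᵥ* gbar⁻¹ = gbar⁻¹ *ᵥ v := fun v => by
    rw [← mulVec_transpose, hsymm']
  have hcancel : ∀ v : Fin n → ℝ, gbar *ᵥ (gbar⁻¹ *ᵥ v) = v := fun v => by
    rw [mulVec_mulVec, hgG, one_mulVec]
  have hYp : Y ⬝ᵥ gbar⁻¹ *ᵥ f = 0 := by
    rw [dotProduct_mulVec, hvec, dotProduct_comm, horth]
  have hu0 : u ≠ 0 := hu.ne'
  have hφ : φ = u ^ 2 - Y ⬝ᵥ gbar⁻¹ *ᵥ Y := by linarith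
  -- The square root enters only through its square, which is nonzero.
  have hsq := Real.sq_sqrt hpos.le
  have hr0 : √(1 - u ^ 2 * (f ⬝ᵥ gbar⁻¹ *ᵥ f)) ≠ 0 := (Real.sqrt_pos.mpr hpos).ne'
  have hgG' : g * gbar⁻¹ = 1 - vecMulVec f (gbar⁻¹ *ᵥ Y) - vecMulVec Y (gbar⁻¹ *ᵥ f)
      - φ • vecMulVec f (gbar⁻¹ *ᵥ f) := by
    simp only [g, sub_mul, smul_mul_assoc, vecMulVec_mul, hvec, hgG]
  have hgv : ∀ v, g *ᵥ v = gbar *ᵥ v - (Y ⬝ᵥ v) • f - (f ⬝ᵥ v) • Y - (φ * (f ⬝ᵥ v)) • f := by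
    intro v
    ext i
    simp [g, sub_mulVec, smul_mulVec, vecMulVec_mulVec]
    ring
  have hgp := hgv (gbar⁻¹ *ᵥ f)
  have hgq := hgv (gbar⁻¹ *ᵥ Y)
  rw [hcancel, hYp] at hgp
  rw [hcancel, horth] at hgq
  have key : g * (gbar⁻¹ - (u ^ 2)⁻¹ • vecMulVec (gbar⁻¹ *ᵥ Y) (gbar⁻¹ *ᵥ Y)
      + vecMulVec w w) = 1 := by
    have hgw : g *ᵥ w = (√(1 - u ^ 2 * (f ⬝ᵥ gbar⁻¹ *ᵥ f)))⁻¹ •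
        (u • g *ᵥ (gbar⁻¹ *ᵥ f) + u⁻¹ • g *ᵥ (gbar⁻¹ *ᵥ Y)) := by
      simp only [w, mulVec_smul, mulVec_add]
    rw [mul_add, mul_sub, mul_smul_comm, mul_vecMulVec, mul_vecMulVec, hgG', hgw, hgp, hgq, hφ]
    ext i j
    simp only [w, Matrix.add_apply, Matrix.sub_apply, Matrix.smul_apply, vecMulVec_apply,
      Pi.add_apply, Pi.sub_apply,
      Pi.smul_apply, smul_eq_mul]
    generalize √(1 - u ^ 2 * (f ⬝ᵥ gbar⁻¹ *ᵥ f)) = r at *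
    generalize f ⬝ᵥ gbar⁻¹ *ᵥ f = a at *
    generalize Y ⬝ᵥ gbar⁻¹ *ᵥ Y = b at *
    generalize (gbar⁻¹ *ᵥ f) j = p
    generalize (gbar⁻¹ *ᵥ Y) j = q
    -- The `i`-th entry of `g w`, with one factor of the square root cancelled.
    have hw : r⁻¹ * (u * (f i - 0 * f i - a * Y i - (u ^ 2 - b) * a * f i)
        + u⁻¹ * (Y i - b * f i - 0 * Y i - (u ^ 2 - b) * 0 * f i))
        = r * ((u - b * u⁻¹) * f i + u⁻¹ * Y i) := by
      field_simp
      rw [hsq]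
      ring
    rw [hw]
    field_simp
    ring
  exact ⟨isUnit_det_of_right_inverse key, inv_eq_right_inv key⟩
end

section
/- Let ḡ be an invertible symmetric n×n real matrix, let f, Y ∈ ℝⁿ satisfy fᵀ ḡ⁻¹ Y = 0, let φ ∈ ℝ and u > 0 satisfy u² = φ + Yᵀ ḡ⁻¹ Y. Set g := ḡ − fYᵀ − Yfᵀ − φ f fᵀ. Then det g = (1 − u² fᵀ ḡ⁻¹ f)·det ḡ. -/
/-! The deformed matrix differs from `gbar` by a rank-two perturbation `U * V`, where `U` has columns
`-f, -Y` and `V` has rows `Y + φ f, f`. The generalized matrix determinant lemma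
`Matrix.det_add_mul` reduces the claim to the `2 × 2` determinant of `1 + V * gbar⁻¹ * U`. Since
`fᵀ gbar⁻¹ Y = 0`, and hence `Yᵀ gbar⁻¹ f = 0` by symmetry, this matrix is
`!![1 - φ a, -c; -a, 1]` with `a = fᵀ gbar⁻¹ f` and `c = Yᵀ gbar⁻¹ Y`, whose determinant is
`1 - (φ + c) a = 1 - u² a`. -/

open Matrix

theorem det_of_graph_deformed_metric (n : ℕ)
    (gbar : Matrix (Fin n) (Fin n) ℝ) (hsymm : gbar.IsSymm) (hinv : IsUnit gbar.det)
    (f Y : Fin n → ℝ) (horth : f ⬝ᵥ gbar⁻¹.mulVec Y = 0)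
    (φ u : ℝ) (hu : 0 < u) (huu : u ^ 2 = φ + Y ⬝ᵥ gbar⁻¹.mulVec Y) :
    (gbar - vecMulVec f Y - vecMulVec Y f - φ • vecMulVec f f).det =
      (1 - u ^ 2 * (f ⬝ᵥ gbar⁻¹.mulVec f)) * gbar.det := by
  have horth' : Y ⬝ᵥ gbar⁻¹.mulVec f = 0 := by
    have hs : (gbar⁻¹)ᵀ = gbar⁻¹ := by rw [transpose_nonsing_inv, hsymm.eq]
    rw [dotProduct_mulVec, ← mulVec_transpose, hs, dotProduct_comm, horth]
  let V : Matrix (Fin 2) (Fin n) ℝ := of ![Y + φ • f, f]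
  let U : Matrix (Fin n) (Fin 2) ℝ := (of ![-f, -Y])ᵀ
  have hUV : gbar - vecMulVec f Y - vecMulVec Y f - φ • vecMulVec f f = gbar + U * V := by
    ext i j
    simp [U, V, mul_apply, Fin.sum_univ_two, vecMulVec_apply]
    ring
  have hentry (i j : Fin 2) :
      (V * gbar⁻¹ * U) i j = V i ⬝ᵥ gbar⁻¹.mulVec (Uᵀ j) := by
    rw [Matrix.mul_assoc]
    rfl
  have hV0 : V 0 = Y + φ • f := rfl
  have hV1 : V 1 = f := rfl
  have hU0 : Uᵀ 0 = -f := rfl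
  have hU1 : Uᵀ 1 = -Y := rfl
  rw [hUV, det_add_mul U V hinv, det_fin_two]
  simp only [Matrix.add_apply, hentry, hV0, hV1, hU0, hU1]
  simp [mulVec_neg, horth, horth', huu]
  ring
end

section
/- Let ḡ be an invertible symmetric n×n real matrix, let f, Y ∈ ℝⁿ satisfy fᵀ ḡ⁻¹ Y = 0, let φ ∈ ℝ and u > 0 satisfy u² = φ + Yᵀ ḡ⁻¹ Y, and assume 1 − u² fᵀ ḡ⁻¹ f > 0. Set g := ḡ − fYᵀ − Yfᵀ − φ f fᵀ. Then g is invertible and (1 + u² fᵀ g⁻¹ f)·(1 − u² fᵀ ḡ⁻¹ f) = 1. -/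
open Matrix

/-!
Write `a = ḡ⁻¹ f`, `b = ḡ⁻¹ Y`, `p = f ⬝ a`, `q = Y ⬝ b` and `D = 1 - u² p`. Orthogonality and the
symmetry of `ḡ` give `f ⬝ b = Y ⬝ a = 0`, so `g a = (1 - φ p) f - p Y` and `g b = Y - q f`; hence
`g (a + p b) = D f`, because `u² = φ + q`. Once `g` is known to be invertible this yields
`f ⬝ g⁻¹ f = p / D`, which is the identity.

Invertibility: if `g v = 0`, then `v = (Y ⬝ v + φ (f ⬝ v)) a + (f ⬝ v) b`. Pairing with `f` and `Y`
gives `D (f ⬝ v) = 0`, so `f ⬝ v = Y ⬝ v = 0` and `v = 0`.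
-/

theorem deformed_mulVec {n : ℕ} (gbar : Matrix (Fin n) (Fin n) ℝ) (f Y v : Fin n → ℝ) (φ : ℝ) :
    (gbar - vecMulVec f Y - vecMulVec Y f - φ • vecMulVec f f) *ᵥ v =
      gbar *ᵥ v - (Y ⬝ᵥ v + φ * (f ⬝ᵥ v)) • f - (f ⬝ᵥ v) • Y := by
  ext i
  simp only [sub_mulVec, smul_mulVec, vecMulVec_mulVec, Pi.sub_apply, Pi.smul_apply,
    MulOpposite.smul_eq_mul_unop, MulOpposite.unop_op, smul_eq_mul]
  ring

theorem lapse_gradient_identity (n : ℕ)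
    (gbar : Matrix (Fin n) (Fin n) ℝ) (hsymm : gbar.IsSymm) (hinv : IsUnit gbar.det)
    (f Y : Fin n → ℝ) (horth : f ⬝ᵥ gbar⁻¹.mulVec Y = 0)
    (φ u : ℝ) (hu : 0 < u) (huu : u ^ 2 = φ + Y ⬝ᵥ gbar⁻¹.mulVec Y)
    (hpos : 0 < 1 - u ^ 2 * (f ⬝ᵥ gbar⁻¹.mulVec f)) :
    let g : Matrix (Fin n) (Fin n) ℝ :=
      gbar - vecMulVec f Y - vecMulVec Y f - φ • vecMulVec f f
    IsUnit g.det ∧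
      (1 + u ^ 2 * (f ⬝ᵥ g⁻¹.mulVec f)) * (1 - u ^ 2 * (f ⬝ᵥ gbar⁻¹.mulVec f)) = 1 := by
  intro g
  have horth' : Y ⬝ᵥ gbar⁻¹ *ᵥ f = 0 := by
    rw [dotProduct_mulVec, ← mulVec_transpose, transpose_nonsing_inv, hsymm.eq, dotProduct_comm,
      horth]
  have hga : gbar *ᵥ (gbar⁻¹ *ᵥ f) = f := by
    rw [mulVec_mulVec, mul_nonsing_inv _ hinv, one_mulVec]
  have hgb : gbar *ᵥ (gbar⁻¹ *ᵥ Y) = Y := by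
    rw [mulVec_mulVec, mul_nonsing_inv _ hinv, one_mulVec]
  have hdet : IsUnit g.det := by
    rw [isUnit_iff_ne_zero]
    intro h0
    obtain ⟨v, hv0, hv⟩ := exists_mulVec_eq_zero_iff.mpr h0
    rw [deformed_mulVec, sub_sub, sub_eq_zero] at hv
    have hv' : v = (Y ⬝ᵥ v + φ * (f ⬝ᵥ v)) • (gbar⁻¹ *ᵥ f) + (f ⬝ᵥ v) • (gbar⁻¹ *ᵥ Y) := by
      rw [← mulVec_smul, ← mulVec_smul, ← mulVec_add, ← hv, mulVec_mulVec,
        nonsing_inv_mul _ hinv, one_mulVec]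
    have h1 := congrArg (f ⬝ᵥ ·) hv'
    have h2 := congrArg (Y ⬝ᵥ ·) hv'
    simp only [dotProduct_add, dotProduct_smul, smul_eq_mul, horth, horth', mul_zero, add_zero,
      zero_add] at h1 h2
    have hs : f ⬝ᵥ v = 0 := by
      have : (f ⬝ᵥ v) * (1 - u ^ 2 * (f ⬝ᵥ gbar⁻¹ *ᵥ f)) = 0 := by
        rw [huu]
        linear_combination h1 + (f ⬝ᵥ gbar⁻¹ *ᵥ f) * h2
      exact (mul_eq_zero.mp this).resolve_right hpos.ne'
    have ht : Y ⬝ᵥ v = 0 := by rw [h2, hs, zero_mul]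
    apply hv0
    rw [hv', hs, ht]
    simp
  refine ⟨hdet, ?_⟩
  have hw : g *ᵥ (gbar⁻¹ *ᵥ f + (f ⬝ᵥ gbar⁻¹ *ᵥ f) • (gbar⁻¹ *ᵥ Y)) =
      (1 - u ^ 2 * (f ⬝ᵥ gbar⁻¹ *ᵥ f)) • f := by
    rw [deformed_mulVec, mulVec_add, mulVec_smul, hga, hgb, huu]
    simp only [dotProduct_add, dotProduct_smul, smul_eq_mul, horth, horth', mul_zero, add_zero,
      zero_add]
    module
  have hp := congrArg (fun w => f ⬝ᵥ g⁻¹ *ᵥ w) hw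
  simp only [mulVec_mulVec, nonsing_inv_mul _ hdet, one_mulVec, mulVec_smul, dotProduct_add,
    dotProduct_smul, smul_eq_mul, horth, mul_zero, add_zero] at hp
  linear_combination (-u ^ 2) * hp
end

section
/- Let U ⊆ ℝ³ be open, let ḡ : U → Sym(3,ℝ) be a differentiable map with ḡ(x) invertible for every x ∈ U and with ∂₃ḡ_{ij} = 0 on U (ḡ is independent of the third coordinate), and let Y^φ : U → ℝ be differentiable. Define Y_j := ḡ_{3j}·Y^φ. Then at every point of U and for all indices i, j ∈ {1,2,3}: ∂_i Y_j + ∂_j Y_i − Σ_{a,l} (ḡ⁻¹)^{al}(∂_i ḡ_{jl} + ∂_j ḡ_{il} − ∂_l ḡ_{ij})·Y_a = ḡ_{3i}·∂_j Y^φ + ḡ_{3j}·∂_i Y^φ. -/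
/-! Contracting the Christoffel-type term with `Y_a = g_{2a} Y^φ` collapses the inverse metric:
`∑_a g_{2a} (g⁻¹)^{al} = δ_2^l`, so only `l = 2` survives and the term becomes
`(∂_i g_{j2} + ∂_j g_{i2} - ∂_2 g_{ij}) Y^φ`, where the last derivative vanishes because the metric
does not depend on the coordinate `x 2`. By symmetry of the metric the first two derivatives cancel
against those produced by the product rule applied to `Y_j = g_{2j} Y^φ`. -/

/-- Partial derivative in the `k`-th coordinate direction of `ℝ³ = Fin 3 → ℝ`. -/
noncomputable def pd3 (k : Fin 3) (F : (Fin 3 → ℝ) → ℝ) (x : Fin 3 → ℝ) : ℝ :=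
  fderiv ℝ F x (Pi.single k 1)

theorem pd3_mul (k : Fin 3) {f h : (Fin 3 → ℝ) → ℝ} {x : Fin 3 → ℝ}
    (hf : DifferentiableAt ℝ f x) (hh : DifferentiableAt ℝ h x) :
    pd3 k (fun y => f y * h y) x = f x * pd3 k h x + pd3 k f x * h x := by
  simp only [pd3]
  rw [fderiv_fun_mul hf hh]
  simp [mul_comm]

theorem second_fundamental_form_shift_identity
    (U : Set (Fin 3 → ℝ)) (hU : IsOpen U)
    (gbar : (Fin 3 → ℝ) → Matrix (Fin 3) (Fin 3) ℝ)
    (hdiff : ∀ i j : Fin 3, ∀ x ∈ U, DifferentiableAt ℝ (fun y => gbar y i j) x)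
    (hsymm : ∀ x ∈ U, (gbar x).IsSymm)
    (hinv : ∀ x ∈ U, IsUnit (gbar x).det)
    (hind : ∀ i j : Fin 3, ∀ x ∈ U, pd3 2 (fun y => gbar y i j) x = 0)
    (Yφ : (Fin 3 → ℝ) → ℝ) (hYφ : ∀ x ∈ U, DifferentiableAt ℝ Yφ x)
    (Yf : Fin 3 → (Fin 3 → ℝ) → ℝ)
    (hYf : ∀ (j : Fin 3) (x : Fin 3 → ℝ), Yf j x = gbar x 2 j * Yφ x) :
    ∀ x ∈ U, ∀ i j : Fin 3,
      pd3 i (Yf j) x + pd3 j (Yf i) x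
        - ∑ a : Fin 3, ∑ l : Fin 3, (gbar x)⁻¹ a l *
            (pd3 i (fun y => gbar y j l) x + pd3 j (fun y => gbar y i l) x
              - pd3 l (fun y => gbar y i j) x) * Yf a x
      = gbar x 2 i * pd3 j Yφ x + gbar x 2 j * pd3 i Yφ x := by
  intro x hx i j
  have hY (k m : Fin 3) : pd3 k (Yf m) x
      = gbar x 2 m * pd3 k Yφ x + pd3 k (fun y => gbar y 2 m) x * Yφ x := by
    rw [show Yf m = fun y => gbar y 2 m * Yφ y from funext (hYf m)]
    exact pd3_mul k (hdiff 2 m x hx) (hYφ x hx)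
  -- Symmetry is only known on `U`; openness of `U` transfers it to derivatives at `x`.
  have hs (k m : Fin 3) :
      pd3 k (fun y => gbar y m 2) x = pd3 k (fun y => gbar y 2 m) x := by
    have he : (fun y => gbar y m 2) =ᶠ[nhds x] fun y => gbar y 2 m := by
      filter_upwards [hU.mem_nhds hx] with y hy
      exact (hsymm y hy).apply 2 m
    simp only [pd3]
    rw [he.fderiv_eq]
  have hδ (l : Fin 3) : ∑ a : Fin 3, gbar x 2 a * (gbar x)⁻¹ a l
      = (1 : Matrix (Fin 3) (Fin 3) ℝ) 2 l := by
    rw [← Matrix.mul_nonsing_inv _ (hinv x hx), Matrix.mul_apply]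
  have hc (T : Fin 3 → ℝ) :
      ∑ a : Fin 3, ∑ l : Fin 3, (gbar x)⁻¹ a l * T l * Yf a x = T 2 * Yφ x := by
    calc _ = ∑ l : Fin 3, (∑ a : Fin 3, gbar x 2 a * (gbar x)⁻¹ a l) * (T l * Yφ x) := by
          rw [Finset.sum_comm]
          refine Finset.sum_congr rfl fun l _ => ?_
          rw [Finset.sum_mul]
          refine Finset.sum_congr rfl fun a _ => ?_
          rw [hYf]
          ring
      _ = T 2 * Yφ x := by simp [hδ, Matrix.one_apply]
  rw [hc fun l => pd3 i (fun y => gbar y j l) x + pd3 j (fun y => gbar y i l) x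
    - pd3 l (fun y => gbar y i j) x, hY, hY, hs, hs, hind i j x hx]
  ring
end

section
/- Let m > 0 and a ∈ ℝ with |a| < m, and fix θ ∈ [0,π]. For r > 0 define r̃(r) = r + m + (m²−a²)/(4r), Δ(r) = r̃(r)² + a² − 2m·r̃(r), and Y^φ(r) = −2m a r̃(r) / ((r̃(r)² + a²)² − Δ(r)·a²·sin²θ). Then Y^φ(r)/r³ → −128·m·a/(m²−a²)³ as r → 0⁺; in particular Y^φ(r) = O(r³) as r → 0. -/
/-!
Put `P(r) = r * r̃(r) = r² + m r + (m² - a²)/4`, a polynomial with `P(0) = (m² - a²)/4 ≠ 0`.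
Multiplying numerator and denominator of `Y^φ(r) / r³` by `r⁴` gives, for `r ≠ 0`, a quotient of
polynomials in `r` whose denominator tends to `P(0)⁴ ≠ 0`. Hence the quotient is continuous at `0`,
with value `-2 m a P(0) / P(0)⁴ = -128 m a / (m² - a²)³`. A finite limit of `Y^φ(r) / r³` yields
the `O(r³)` bound.
-/

/-- The Boyer–Lindquist radius in terms of the quasi-isotropic (Brill) radius. -/
noncomputable def kerrRt (m a r : ℝ) : ℝ := r + m + (m^2 - a^2) / (4*r)

/-- The Kerr function Δ = r̃² + a² − 2m r̃. -/
noncomputable def kerrDelta (m a r : ℝ) : ℝ :=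
  (kerrRt m a r)^2 + a^2 - 2*m*(kerrRt m a r)

/-- The φ-component of the Kerr shift vector, in quasi-isotropic coordinates. -/
noncomputable def kerrYphi (m a θ r : ℝ) : ℝ :=
  -(2*m*a*(kerrRt m a r)) /
    (((kerrRt m a r)^2 + a^2)^2 - kerrDelta m a r * a^2 * Real.sin θ ^ 2)

/-- The polynomial `r * r̃(r)`, extended to `r = 0`. -/
noncomputable def kerrP (m a r : ℝ) : ℝ := r^2 + m*r + (m^2 - a^2) / 4

/-- The denominator of `Y^φ` multiplied by `r⁴`, written as a polynomial in `r`. -/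
noncomputable def kerrDen (m a θ r : ℝ) : ℝ :=
  ((kerrP m a r)^2 + a^2*r^2)^2
    - r^2 * ((kerrP m a r)^2 + a^2*r^2 - 2*m*r*kerrP m a r) * a^2 * Real.sin θ ^ 2

lemma kerrRt_eq (m a : ℝ) {r : ℝ} (hr : r ≠ 0) : kerrRt m a r = kerrP m a r / r := by
  unfold kerrRt kerrP
  field_simp

lemma kerrYphi_div_eq (m a θ : ℝ) {r : ℝ} (hr : r ≠ 0) :
    kerrYphi m a θ r / r^3 = -(2*m*a*kerrP m a r) / kerrDen m a θ r := by
  have hD : ((kerrRt m a r)^2 + a^2)^2 - kerrDelta m a r * a^2 * Real.sin θ ^ 2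
      = kerrDen m a θ r / r^4 := by
    unfold kerrDelta kerrDen
    rw [kerrRt_eq m a hr]
    field_simp
  unfold kerrYphi
  rw [hD, kerrRt_eq m a hr]
  -- The identity also holds where the denominator vanishes, both sides then being `0`.
  by_cases h : kerrDen m a θ r = 0
  · simp [h]
  · field_simp

theorem nonextreme_kerr_shift_asymptotics_at_puncture (m a θ : ℝ) (hm : 0 < m)
    (ha : |a| < m) (hθ : θ ∈ Set.Icc 0 Real.pi) :
    Filter.Tendsto (fun r : ℝ => kerrYphi m a θ r / r^3)
        (nhdsWithin 0 (Set.Ioi 0)) (nhds (-(128*m*a) / (m^2 - a^2)^3)) ∧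
      (fun r : ℝ => kerrYphi m a θ r) =O[nhdsWithin 0 (Set.Ioi 0)] (fun r : ℝ => r^3) := by
  have hk : m^2 - a^2 ≠ 0 := by
    have : a^2 < m^2 := sq_lt_sq.mpr (by rwa [abs_of_pos hm])
    linarith
  have hD0 : kerrDen m a θ 0 = ((m^2 - a^2) / 4)^4 := by
    simp only [kerrDen, kerrP]; ring
  have hcont : ContinuousAt
      (fun r : ℝ => -(2*m*a*kerrP m a r) / kerrDen m a θ r) 0 := by
    refine ContinuousAt.div ?_ ?_ ?_
    · unfold kerrP; fun_prop
    · unfold kerrDen kerrP; fun_prop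
    · rw [hD0]; positivity
  have hval : -(2*m*a*kerrP m a 0) / kerrDen m a θ 0 = -(128*m*a) / (m^2 - a^2)^3 := by
    rw [hD0, kerrP]
    field_simp
    ring
  have hlim : Filter.Tendsto (fun r : ℝ => kerrYphi m a θ r / r^3)
      (nhdsWithin 0 (Set.Ioi 0)) (nhds (-(128*m*a) / (m^2 - a^2)^3)) := by
    rw [← hval]
    refine (hcont.tendsto.mono_left nhdsWithin_le_nhds).congr' ?_
    filter_upwards [self_mem_nhdsWithin] with r hr
    exact (kerrYphi_div_eq m a θ (ne_of_gt hr)).symm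
  refine ⟨hlim, Asymptotics.isBigO_of_div_tendsto_nhds ?_ _ hlim⟩
  filter_upwards [self_mem_nhdsWithin] with r hr h0
  exact absurd h0 (pow_ne_zero 3 (ne_of_gt hr))
end

section
/- Let W : (0,∞) → ℝ be continuously differentiable with W > 0, let b, h : (0,∞) → ℝ be continuous with h ≥ 0, fix r₀ > 0, and set B(r) = ∫_{r₀}^r b(s) ds. Assume that for every t > 0 the function s ↦ W(s)e^{−B(s)}h(s) is integrable on (0,t), and that for every r > 0 the function t ↦ W(t)⁻¹e^{B(t)}·I(t), where I(t) := ∫_0^t W(s)e^{−B(s)}h(s) ds, is integrable on (r,∞). Define f̄(r) := ∫_r^∞ W(t)⁻¹e^{B(t)}I(t) dt. Then f̄ ≥ 0 on (0,∞), f̄ is twice differentiable with f̄'(r) = −W(r)⁻¹e^{B(r)}I(r) ≤ 0, f̄ satisfies the ODE f̄''(r) + (W'(r)/W(r) − b(r))·f̄'(r) = −h(r) for all r > 0, and f̄(r) → 0 as r → ∞. -/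
/-!
With `B` a primitive of `b` and `I` a primitive of `W e^{-B} h` on `(0, ∞)`, the function
`g = W⁻¹ e^B I` is nonnegative and differentiable there, and `fbar` is its tail integral. Hence
`fbar ≥ 0`, `fbar → 0` at infinity and `fbar' = -g ≤ 0`; differentiating the product `W⁻¹ e^B I` once
more, the factors `W` and `e^{±B}` cancel in the term coming from `I'`, which leaves
`fbar'' = -h - (W' / W - b) fbar'`.

The analytic input is the fundamental theorem of calculus for functions continuous on `(0, ∞)`,
`hasDerivAt_integral_of_continuousOn_Ioi`. It asks only for integrability near the left endpoint, so it
covers both `B` (based at `r₀ > 0`) and `I` (based at the singular endpoint `0`). The tail integral is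
reduced to it by subtracting `∫ t in 1..r, g t` from `fbar 1`.
-/

open MeasureTheory

theorem hasDerivAt_integral_of_continuousOn_Ioi {f : ℝ → ℝ} {a r : ℝ}
    (hf : ContinuousOn f (Set.Ioi 0)) (hr : 0 < r) (hi : IntervalIntegrable f volume a r) :
    HasDerivAt (fun u => ∫ x in a..u, f x) (f r) r :=
  intervalIntegral.integral_hasDerivAt_right hi
    (hf.stronglyMeasurableAtFilter isOpen_Ioi r hr) (hf.continuousAt (Ioi_mem_nhds hr))

theorem radial_supersolution_construction
    (W b h : ℝ → ℝ) (r₀ : ℝ) (hr₀ : 0 < r₀)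
    (hW : ContDiffOn ℝ 1 W (Set.Ioi 0)) (hWpos : ∀ r ∈ Set.Ioi (0:ℝ), 0 < W r)
    (hb : ContinuousOn b (Set.Ioi 0)) (hh : ContinuousOn h (Set.Ioi 0))
    (hh0 : ∀ r ∈ Set.Ioi (0:ℝ), 0 ≤ h r)
    (B : ℝ → ℝ) (hB : ∀ r, B r = ∫ s in r₀..r, b s)
    (I : ℝ → ℝ) (hI : ∀ t, I t = ∫ s in Set.Ioo (0:ℝ) t, W s * Real.exp (-B s) * h s)
    (hint₁ : ∀ t > (0:ℝ),
      IntegrableOn (fun s => W s * Real.exp (-B s) * h s) (Set.Ioo 0 t))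
    (hint₂ : ∀ r > (0:ℝ),
      IntegrableOn (fun t => (W t)⁻¹ * Real.exp (B t) * I t) (Set.Ioi r))
    (fbar : ℝ → ℝ)
    (hf : ∀ r, fbar r = ∫ t in Set.Ioi r, (W t)⁻¹ * Real.exp (B t) * I t) :
    (∀ r ∈ Set.Ioi (0:ℝ), 0 ≤ fbar r) ∧
    (∀ r ∈ Set.Ioi (0:ℝ),
      HasDerivAt fbar (-((W r)⁻¹ * Real.exp (B r) * I r)) r) ∧
    (∀ r ∈ Set.Ioi (0:ℝ), -((W r)⁻¹ * Real.exp (B r) * I r) ≤ 0) ∧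
    (∀ r ∈ Set.Ioi (0:ℝ),
      HasDerivAt (fun x => -((W x)⁻¹ * Real.exp (B x) * I x))
        (-h r - (deriv W r / W r - b r) * (-((W r)⁻¹ * Real.exp (B r) * I r))) r) ∧
    Filter.Tendsto fbar Filter.atTop (nhds 0) := by
  have hBd : ∀ r ∈ Set.Ioi (0:ℝ), HasDerivAt B (b r) r := by
    intro r hr
    rw [show B = fun u => ∫ s in r₀..u, b s from funext hB]
    refine hasDerivAt_integral_of_continuousOn_Ioi hb hr (ContinuousOn.intervalIntegrable ?_)
    exact hb.mono fun x hx => lt_of_lt_of_le (lt_min hr₀ hr) hx.1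
  have hWd : ∀ r ∈ Set.Ioi (0:ℝ), HasDerivAt W (deriv W r) r := fun r hr =>
    ((hW.differentiableOn one_ne_zero).differentiableAt (Ioi_mem_nhds hr)).hasDerivAt
  have hBc : ContinuousOn B (Set.Ioi 0) := fun r hr => (hBd r hr).continuousAt.continuousWithinAt
  have hkc : ContinuousOn (fun s => W s * Real.exp (-B s) * h s) (Set.Ioi 0) :=
    (hW.continuousOn.mul hBc.neg.rexp).mul hh
  have hId : ∀ r ∈ Set.Ioi (0:ℝ), HasDerivAt I (W r * Real.exp (-B r) * h r) r := by
    intro r hr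
    have hi : IntervalIntegrable (fun s => W s * Real.exp (-B s) * h s) volume 0 r :=
      (intervalIntegrable_iff_integrableOn_Ioo_of_le (le_of_lt hr)).2 (hint₁ r hr)
    refine (hasDerivAt_integral_of_continuousOn_Ioi hkc hr hi).congr_of_eventuallyEq ?_
    filter_upwards [Ioi_mem_nhds hr] with u hu
    rw [hI, intervalIntegral.integral_of_le (le_of_lt hu), integral_Ioc_eq_integral_Ioo]
  have hI0 : ∀ r, 0 ≤ I r := by
    intro r
    rw [hI]
    exact setIntegral_nonneg measurableSet_Ioo fun s hs =>
      mul_nonneg (mul_pos (hWpos s hs.1) (Real.exp_pos _)).le (hh0 s hs.1)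
  have hg0 : ∀ r ∈ Set.Ioi (0:ℝ), 0 ≤ (W r)⁻¹ * Real.exp (B r) * I r := fun r hr =>
    mul_nonneg (mul_pos (inv_pos.2 (hWpos r hr)) (Real.exp_pos _)).le (hI0 r)
  have hgd : ∀ r ∈ Set.Ioi (0:ℝ), HasDerivAt (fun x => -((W x)⁻¹ * Real.exp (B x) * I x))
      (-h r - (deriv W r / W r - b r) * (-((W r)⁻¹ * Real.exp (B r) * I r))) r := by
    intro r hr
    have hne := (hWpos r hr).ne'
    refine ((((hWd r hr).fun_inv hne).fun_mul (hBd r hr).exp).fun_mul (hId r hr)).fun_neg.congr_deriv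
      ?_
    rw [Real.exp_neg]
    field_simp
    ring
  have hgc : ContinuousOn (fun t => (W t)⁻¹ * Real.exp (B t) * I t) (Set.Ioi 0) := fun r hr => by
    simpa only [neg_neg] using (hgd r hr).continuousAt.fun_neg.continuousWithinAt (s := Set.Ioi 0)
  have hgi : ∀ r ∈ Set.Ioi (0:ℝ),
      IntervalIntegrable (fun t => (W t)⁻¹ * Real.exp (B t) * I t) volume 1 r := fun r hr =>
    ContinuousOn.intervalIntegrable
      (hgc.mono fun x hx => lt_of_lt_of_le (lt_min one_pos hr) hx.1)
  have htail : ∀ r ∈ Set.Ioi (0:ℝ),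
      fbar r = fbar 1 - ∫ t in (1:ℝ)..r, (W t)⁻¹ * Real.exp (B t) * I t := by
    intro r hr
    have := intervalIntegral.integral_interval_add_Ioi' (hgi r hr) (hint₂ r hr)
    rw [hf r, hf 1]
    linarith
  refine ⟨fun r hr => ?_, fun r hr => ?_, fun r hr => neg_nonpos.2 (hg0 r hr), hgd, ?_⟩
  · rw [hf]
    exact setIntegral_nonneg measurableSet_Ioi fun t ht => hg0 t (lt_trans (Set.mem_Ioi.1 hr) ht)
  · refine ((hasDerivAt_integral_of_continuousOn_Ioi hgc hr (hgi r hr)).const_sub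
      (fbar 1)).congr_of_eventuallyEq ?_
    filter_upwards [Ioi_mem_nhds hr] with u hu using htail u hu
  · have hlim := (intervalIntegral_tendsto_integral_Ioi 1 (hint₂ 1 one_pos)
      Filter.tendsto_id).const_sub (fbar 1)
    rw [← hf, sub_self] at hlim
    refine hlim.congr' ?_
    filter_upwards [Filter.eventually_gt_atTop 0] with u hu using (htail u hu).symm
end
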